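/- For every natural number n ≥ 1, the diameter of the set I_n = {1, 2, …, n} with respect to the metric d equals ξ₂(n) + ξ₃(n); that is, sup{d(x,y) : x, y ∈ I_n} = ξ₂(n) + ξ₃(n), where ξ₂(n) and ξ₃(n) are the integer parts of the base-2 and base-3 logarithms of n respectively. -/

import Mathlib

/-- Ω(n): the number of prime factors of n counted with multiplicity. -/
def Omega (n : ℕ) : ℕ := n.primeFactorsList.length

/-- The arithmetic distance d(a,b) = Ω(lcm(a,b)) − Ω(gcd(a,b)). -/
def arithDist (a b : ℕ) : ℕ := Omega (Nat.lcm a b) - Omega (Nat.gcd a b)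

theorem Omega_mul_aux {a b : ℕ} (ha : a ≠ 0) (hb : b ≠ 0) :
    Omega (a * b) = Omega a + Omega b := by
  unfold Omega
  rw [(Nat.perm_primeFactorsList_mul ha hb).length_eq, List.length_append]

theorem pow_Omega_le_aux {k a : ℕ} (ha : a ≠ 0)
    (h : ∀ p ∈ a.primeFactorsList, k ≤ p) : k ^ Omega a ≤ a := by
  unfold Omega
  calc k ^ a.primeFactorsList.length ≤ a.primeFactorsList.prod :=
        List.pow_card_le_prod _ _ h
    _ = a := Nat.prod_primeFactorsList ha

theorem Omega_le_two_aux {a n : ℕ} (ha : a ≠ 0) (han : a ≤ n) : Omega a ≤ Nat.log 2 n := by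
  apply Nat.le_log_of_pow_le (by norm_num)
  exact (pow_Omega_le_aux ha fun p hp => (Nat.prime_of_mem_primeFactorsList hp).two_le).trans han

theorem Omega_le_three_aux {a n : ℕ} (ha : a ≠ 0) (han : a ≤ n) (h2 : ¬ 2 ∣ a) :
    Omega a ≤ Nat.log 3 n := by
  apply Nat.le_log_of_pow_le (by norm_num)
  refine (pow_Omega_le_aux ha fun p hp => ?_).trans han
  have h1 := (Nat.prime_of_mem_primeFactorsList hp).two_le
  have h3 := Nat.dvd_of_mem_primeFactorsList hp
  rcases Nat.lt_or_ge p 3 with h | h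
  · obtain rfl : p = 2 := by omega
    exact absurd h3 h2
  · exact h

theorem arithDist_aux {g a b : ℕ} (hg : g ≠ 0) (ha : a ≠ 0) (hb : b ≠ 0)
    (hab : Nat.Coprime a b) : arithDist (g * a) (g * b) = Omega a + Omega b := by
  unfold arithDist
  rw [Nat.lcm_mul_left, Nat.gcd_mul_left, hab.lcm_eq_mul, hab.gcd_eq_one, mul_one,
    Omega_mul_aux hg (mul_ne_zero ha hb), Omega_mul_aux ha hb]
  omega

theorem arithDist_le_aux {x y n : ℕ} (hx : 1 ≤ x) (hxn : x ≤ n) (hy : 1 ≤ y) (hyn : y ≤ n) :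
    arithDist x y ≤ Nat.log 2 n + Nat.log 3 n := by
  have hg : 0 < Nat.gcd x y := Nat.gcd_pos_of_pos_left _ hx
  have hc := Nat.coprime_div_gcd_div_gcd hg
  have ex := Nat.mul_div_cancel' (Nat.gcd_dvd_left x y)
  have ey := Nat.mul_div_cancel' (Nat.gcd_dvd_right x y)
  have lx := (Nat.div_le_self x (Nat.gcd x y)).trans hxn
  have ly := (Nat.div_le_self y (Nat.gcd x y)).trans hyn
  generalize Nat.gcd x y = g at *
  generalize x / g = a at *
  generalize y / g = b at *
  have ha : a ≠ 0 := by rintro rfl; omega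
  have hb : b ≠ 0 := by rintro rfl; omega
  rw [← ex, ← ey, arithDist_aux hg.ne' ha hb hc]
  by_cases h2 : 2 ∣ a
  · have hb2 : ¬ 2 ∣ b := fun h => by
      have := Nat.dvd_gcd h2 h
      rw [hc.gcd_eq_one] at this
      omega
    exact add_le_add (Omega_le_two_aux ha lx) (Omega_le_three_aux hb ly hb2)
  · rw [add_comm]
    exact add_le_add (Omega_le_two_aux hb ly) (Omega_le_three_aux ha lx h2)

theorem Omega_prime_pow_aux {p : ℕ} (hp : p.Prime) (k : ℕ) : Omega (p ^ k) = k := by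
  unfold Omega
  rw [hp.primeFactorsList_pow, List.length_replicate]

theorem diameter_Icc_eq (n : ℕ) (hn : 1 ≤ n) :
    sSup {m : ℕ | ∃ x ∈ Set.Icc 1 n, ∃ y ∈ Set.Icc 1 n, arithDist x y = m} =
      Nat.log 2 n + Nat.log 3 n := by
  apply IsGreatest.csSup_eq
  constructor
  · refine ⟨2 ^ Nat.log 2 n, ⟨Nat.one_le_two_pow, Nat.pow_log_le_self 2 (by omega)⟩,
      3 ^ Nat.log 3 n, ⟨Nat.one_le_pow _ _ (by norm_num), Nat.pow_log_le_self 3 (by omega)⟩, ?_⟩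
    have h := arithDist_aux (g := 1) (a := 2 ^ Nat.log 2 n) (b := 3 ^ Nat.log 3 n) one_ne_zero
      (by positivity) (by positivity) (Nat.Coprime.pow _ _ (by norm_num))
    rwa [one_mul, one_mul, Omega_prime_pow_aux Nat.prime_two,
      Omega_prime_pow_aux Nat.prime_three] at h
  · rintro m ⟨x, hx, y, hy, rfl⟩
    exact arithDist_le_aux hx.1 hx.2 hy.1 hy.2
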